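/- arXiv:2404.14466 — 5 statements merged into one kernel-verified Lean document; each statement's English description precedes it below -/
import Mathlib

section
/- Let k > 1 be an integer such that k+2 is prime, and set N := k+2. Then the real numbers d_m := sin(mπ/N)/sin(π/N) for m = 1, 2, …, (k+1)/2 are linearly independent over ℚ. -/
open Real

/-!
With `θ = π / N`, the quantum integer `d_{m+1} = sin ((m + 1) θ) / sin θ` is `U_m (cos θ)`, where
`U_m` is the Chebyshev polynomial of the second kind, of degree `m`. A nontrivial rational relation
among `d_1, …, d_n` is therefore a nonzero rational polynomial of degree less than `n` vanishing at
`cos θ`. But `exp (iθ)`, a primitive `2N`-th root of unity, is a root of `X² - 2 (cos θ) X + 1`, so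
`cos θ` has degree at least `φ(2N) / 2`; and `φ(2N) = N - 1` when `N` is an odd prime.
-/

open Polynomial IntermediateField

section FieldTheory

variable {K L : Type*} [Field K]

theorem linearIndependent_aeval_sequence [Ring L] [Algebra K L] (S : Polynomial.Sequence K) {x : L}
    {n : ℕ} (hn : n ≤ (minpoly K x).natDegree) :
    LinearIndependent K fun m : Fin n => aeval x (S m) := by
  have span_le : Submodule.span K (Set.range fun m : Fin n => S m) ≤ degreeLT K n := by
    rw [Submodule.span_le]
    rintro _ ⟨m, rfl⟩
    simp [mem_degreeLT]
  have disjoint_ker : Disjoint (degreeLT K n) (aeval x : K[X] →ₐ[K] L).toLinearMap.ker := by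
    refine Submodule.disjoint_def.2 fun p hp hpx => by_contra fun hp0 => ?_
    have natDegree_lt : p.natDegree < n := (natDegree_lt_iff_degree_lt hp0).2 (mem_degreeLT.1 hp)
    have le_natDegree : (minpoly K x).natDegree ≤ p.natDegree :=
      natDegree_le_natDegree (minpoly.degree_le_of_ne_zero K x hp0 hpx)
    omega
  exact (S.linearIndependent.comp _ Fin.val_injective).map (disjoint_ker.mono_left span_le)

variable {F : Type*} [Field F] [Field L] [Algebra K F] [Algebra F L] [Algebra K L]
  [IsScalarTower K F L] [FiniteDimensional K F]

theorem natDegree_minpoly_le_finrank_mul_natDegree {z : L} {p : F[X]} (hp : p ≠ 0)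
    (hz : aeval z p = 0) : (minpoly K z).natDegree ≤ Module.finrank K F * p.natDegree := by
  have isIntegral_z : IsIntegral F z := IsAlgebraic.isIntegral ⟨p, hp, hz⟩
  have : FiniteDimensional F F⟮z⟯ := adjoin.finiteDimensional isIntegral_z
  have : FiniteDimensional K F⟮z⟯ := .trans K F F⟮z⟯
  have : IsScalarTower K F⟮z⟯ L := .to₁₃₄ K F F⟮z⟯ L
  calc (minpoly K z).natDegree
      = (minpoly K (AdjoinSimple.gen F z)).natDegree := by
        rw [← minpoly.algebraMap_eq (algebraMap F⟮z⟯ L).injective, AdjoinSimple.algebraMap_gen]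
    _ ≤ Module.finrank K F⟮z⟯ := minpoly.natDegree_le _
    _ = Module.finrank K F * (minpoly F z).natDegree := by
        rw [← Module.finrank_mul_finrank K F, adjoin.finrank isIntegral_z]
    _ ≤ Module.finrank K F * p.natDegree := by
        gcongr
        exact natDegree_le_natDegree (minpoly.degree_le_of_ne_zero F z hp hz)

end FieldTheory

section Trigonometry

/-- The Chebyshev polynomials of the second kind `U_0, U_1, …`, as a sequence of polynomials with
one member of each degree. -/
noncomputable def chebyshevUSequence (K : Type*) [CommRing K] [IsDomain K] [NeZero (2 : K)] :
    Polynomial.Sequence K where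
  elems' m := Chebyshev.U K m
  degree_eq' := Chebyshev.degree_U_natCast K

theorem aeval_chebyshevUSequence_cos {K : Type*} [CommRing K] [IsDomain K] [NeZero (2 : K)]
    [Algebra K ℝ] {θ : ℝ} (hθ : sin θ ≠ 0) (m : ℕ) :
    aeval (cos θ) (chebyshevUSequence K m) = sin ((m + 1) * θ) / sin θ := by
  rw [eq_div_iff hθ]
  exact (congrArg (· * sin θ) (Chebyshev.aeval_U ..)).trans (mod_cast Chebyshev.U_real_cos θ m)

theorem linearIndependent_sin_mul_div_sin {K : Type*} [Field K] [Algebra K ℝ] {θ : ℝ}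
    (hθ : sin θ ≠ 0) {n : ℕ} (hn : n ≤ (minpoly K (cos θ)).natDegree) :
    LinearIndependent K fun m : Fin n => sin (((m : ℕ) + 1) * θ) / sin θ := by
  have : CharZero K := (algebraMap K ℝ).charZero
  simpa only [aeval_chebyshevUSequence_cos hθ] using
    linearIndependent_aeval_sequence (chebyshevUSequence K) hn

theorem natDegree_minpoly_exp_mul_I_le_mul_two {K : Type*} [Field K] [Algebra K ℂ] {θ : ℂ}
    (hθ : IsIntegral K (Complex.cos θ)) :
    (minpoly K (Complex.exp (θ * Complex.I))).natDegree ≤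
      (minpoly K (Complex.cos θ)).natDegree * 2 := by
  let p : K⟮Complex.cos θ⟯[X] := X ^ 2 - C (2 * AdjoinSimple.gen K (Complex.cos θ)) * X + 1
  have natDegree_p : p.natDegree = 2 := by unfold p; compute_degree!
  have aeval_p : aeval (Complex.exp (θ * Complex.I)) p = 0 := by
    have exp_mul_exp_neg : Complex.exp (θ * Complex.I) * Complex.exp (-θ * Complex.I) = 1 := by
      rw [← Complex.exp_add]; simp
    simp only [p, map_add, map_sub, map_mul, map_pow, map_one, map_ofNat, aeval_X, aeval_C,
      AdjoinSimple.algebraMap_gen, Complex.two_cos]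
    linear_combination -exp_mul_exp_neg
  have p_ne_zero : p ≠ 0 := ne_zero_of_natDegree_gt (n := 0) (by omega)
  have := adjoin.finiteDimensional hθ
  simpa only [adjoin.finrank hθ, natDegree_p] using
    natDegree_minpoly_le_finrank_mul_natDegree (K := K) p_ne_zero aeval_p

theorem totient_two_mul_le_natDegree_minpoly_cos_pi_div_mul_two {N : ℕ} (hN : N ≠ 0) :
    (2 * N).totient ≤ (minpoly ℚ (cos (π / N))).natDegree * 2 := by
  have isPrimitiveRoot : IsPrimitiveRoot (Complex.exp (↑(π / N) * Complex.I)) (2 * N) := by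
    convert Complex.isPrimitiveRoot_exp (2 * N) (by omega) using 2
    push_cast
    field_simp
  have isIntegral_cos : IsIntegral ℚ (Complex.cos ↑(π / N)) := by
    have isAlgebraic_cos := Complex.isAlgebraic_cos_rat_mul_pi (1 / N)
    push_cast [one_div_mul_eq_div] at isAlgebraic_cos ⊢
    exact (isAlgebraic_cos.extendScalars Int.cast_injective).isIntegral
  calc (2 * N).totient
      = (minpoly ℚ (Complex.exp (↑(π / N) * Complex.I))).natDegree := by
        rw [← cyclotomic_eq_minpoly_rat isPrimitiveRoot (by omega), natDegree_cyclotomic]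
    _ ≤ (minpoly ℚ (Complex.cos ↑(π / N))).natDegree * 2 :=
        natDegree_minpoly_exp_mul_I_le_mul_two isIntegral_cos
    _ = (minpoly ℚ (cos (π / N))).natDegree * 2 := by
        rw [← Complex.ofReal_cos, ← Complex.coe_algebraMap,
          minpoly.algebraMap_eq (algebraMap ℝ ℂ).injective]

end Trigonometry

theorem psu2_dimensions_rationally_independent_general {n N : ℕ} (hn : n ≤ (2 * N).totient / 2) :
    LinearIndependent ℚ fun m : Fin n => sin (((m : ℕ) + 1) * π / N) / sin (π / N) := by
  obtain rfl | n_pos := n.eq_zero_or_pos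
  · exact linearIndependent_empty_type
  have one_lt_N : 1 < N := by
    by_contra! hN
    interval_cases N <;> simp_all
  have sin_ne_zero : sin (π / N) ≠ 0 :=
    (sin_pos_of_pos_of_lt_pi (by positivity) (div_lt_self pi_pos (mod_cast one_lt_N))).ne'
  have n_le_natDegree : n ≤ (minpoly ℚ (cos (π / N))).natDegree := by
    have := totient_two_mul_le_natDegree_minpoly_cos_pi_div_mul_two (N := N) (by omega)
    omega
  simpa only [mul_div_assoc] using linearIndependent_sin_mul_div_sin sin_ne_zero n_le_natDegree

/-- For `k > 1` with `k + 2` prime, the real numbers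
`d_m = sin(mπ/(k+2)) / sin(π/(k+2))` for `m = 1, …, (k+1)/2` are
linearly independent over `ℚ`. -/
theorem psu2_dimensions_rationally_independent (k : ℕ) (hk : 1 < k)
    (hp : Nat.Prime (k + 2)) :
    LinearIndependent ℚ (fun m : Fin ((k + 1) / 2) =>
      Real.sin (((m : ℕ) + 1) * Real.pi / (k + 2)) / Real.sin (Real.pi / (k + 2))) := by
  have totient_eq : (2 * (k + 2)).totient = k + 1 := by
    rw [Nat.totient_two_mul_of_odd (hp.odd_of_ne_two (by omega)), Nat.totient_prime hp]
    rfl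
  exact_mod_cast psu2_dimensions_rationally_independent_general (N := k + 2) (by rw [totient_eq])
end

section
/- Let α := (3 + √5 + √(6(5+√5)))/4. Then α is a root of the polynomial p_α(x) = x⁴ − 3x³ − x² + 3x + 1, and p_α is the minimal polynomial of α over ℚ (in particular p_α is irreducible over ℚ and α has degree 4 over ℚ). -/
open Polynomial

/-!
Writing `φ` for the golden ratio, `α = (φ² + √(φ⁴ + 4)) / 2` is the positive solution of
`α - α⁻¹ = φ²`. Since `φ²` is a root of `y² - 3y + 1`, clearing denominators in
`y = x - x⁻¹` makes `α` a root of `(x² - 1)² - 3x(x² - 1) + x² = p_α(x)`. Modulo `5`,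
`p_α` is `(x - 2)⁴`, and `p_α(x + 2)` is Eisenstein at `5`.
-/

theorem monic_taylor {R : Type*} [Semiring R] {f : R[X]} (hf : f.Monic) (r : R) :
    (taylor r f).Monic :=
  (leadingCoeff_taylor r f).trans hf

theorem irreducible_map_of_isEisensteinAt_taylor {R K : Type*} [CommRing R] [IsDomain R]
    [IsIntegrallyClosed R] [Field K] [Algebra R K] [IsFractionRing R K] {𝓟 : Ideal R}
    (h𝓟 : 𝓟.IsPrime) {f : R[X]} (hf : f.Monic) (hdeg : 0 < f.natDegree) (r : R)
    (hEis : (taylor r f).IsEisensteinAt 𝓟) : Irreducible (f.map (algebraMap R K)) := by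
  have htaylor : Irreducible (taylor r f) :=
    hEis.irreducible h𝓟 (monic_taylor hf r).isPrimitive (by rwa [natDegree_taylor])
  have hirr : Irreducible f := (MulEquiv.irreducible_iff (taylorEquiv r)).1 htaylor
  exact hf.irreducible_iff_irreducible_map_fraction_map.1 hirr

theorem sq_half_add_sqrt_sq_add_four (b : ℝ) :
    ((b + √(b ^ 2 + 4)) / 2) ^ 2 = b * ((b + √(b ^ 2 + 4)) / 2) + 1 := by
  have hsq : √(b ^ 2 + 4) ^ 2 = b ^ 2 + 4 := Real.sq_sqrt (by positivity)
  linear_combination hsq / 4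

/-- The polynomial `p_α` of the paper, over an arbitrary commutative ring, so that its integral
and its rational versions are related by `alphaPoly_map`. -/
noncomputable def alphaPoly (R : Type*) [CommRing R] : R[X] :=
  X ^ 4 - 3 * X ^ 3 - X ^ 2 + 3 * X + 1

section alphaPoly

variable (R : Type*) [CommRing R]

theorem alphaPoly_monic : (alphaPoly R).Monic := by
  unfold alphaPoly
  monicity!

theorem alphaPoly_natDegree [Nontrivial R] : (alphaPoly R).natDegree = 4 := by
  unfold alphaPoly
  compute_degree!

theorem taylor_two_alphaPoly :
    taylor 2 (alphaPoly R) = X ^ 4 + 5 * (X ^ 3 + X ^ 2 - X - 1) := by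
  have hX : taylor (2 : R) X = X + 2 := by rw [taylor_X, map_ofNat]
  have h3 : taylor (2 : R) 3 = 3 := taylor_C 2 3
  simp only [alphaPoly, map_add, map_sub, taylor_mul, taylor_pow, taylor_one, map_one, hX, h3]
  ring

end alphaPoly

theorem alphaPoly_map {R S : Type*} [CommRing R] [CommRing S] (f : R →+* S) :
    (alphaPoly R).map f = alphaPoly S := by
  simp [alphaPoly]

theorem aeval_alphaPoly_eq_zero {R A : Type*} [CommRing R] [CommRing A] [Algebra R A] {b x : A}
    (hb : b ^ 2 = 3 * b - 1) (hx : x ^ 2 = b * x + 1) : aeval x (alphaPoly R) = 0 := by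
  simp only [alphaPoly, map_add, map_sub, map_mul, map_pow, aeval_X, map_ofNat, map_one]
  linear_combination (x ^ 2 - 1 + b * x - 3 * x) * hx + x ^ 2 * hb

theorem isEisensteinAt_taylor_two_alphaPoly :
    (taylor 2 (alphaPoly ℤ)).IsEisensteinAt (Ideal.span {5}) := by
  refine (monic_taylor (alphaPoly_monic ℤ) 2).isEisensteinAt_of_mem_of_notMem ?_ ?_ ?_
  · rw [Ne, Ideal.span_singleton_eq_top]
    decide
  · intro n hn
    rw [natDegree_taylor, alphaPoly_natDegree] at hn
    rw [taylor_two_alphaPoly, coeff_add, coeff_X_pow, if_neg hn.ne, zero_add, coeff_ofNat_mul]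
    exact Ideal.mem_span_singleton.2 (dvd_mul_right _ _)
  · rw [taylor_two_alphaPoly, Ideal.span_singleton_pow, Ideal.mem_span_singleton]
    simp

theorem irreducible_alphaPoly_rat : Irreducible (alphaPoly ℚ) := by
  have hprime : (Ideal.span {(5 : ℤ)}).IsPrime :=
    (Ideal.span_singleton_prime (by norm_num)).2 (by norm_num)
  rw [← alphaPoly_map (algebraMap ℤ ℚ)]
  exact irreducible_map_of_isEisensteinAt_taylor hprime (alphaPoly_monic ℤ)
    (by simp [alphaPoly_natDegree]) 2 isEisensteinAt_taylor_two_alphaPoly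

theorem goldenRatio_sq_eq : Real.goldenRatio ^ 2 = (3 + √5) / 2 := by
  rw [Real.goldenRatio_sq, Real.goldenRatio]
  ring

theorem goldenRatio_sq_sq :
    (Real.goldenRatio ^ 2) ^ 2 = 3 * Real.goldenRatio ^ 2 - 1 := by
  linear_combination (Real.goldenRatio ^ 2 + Real.goldenRatio - 1) * Real.goldenRatio_sq

theorem alpha_eq_half_add_sqrt :
    (3 + √5 + √(6 * (5 + √5))) / 4 =
      (Real.goldenRatio ^ 2 + √((Real.goldenRatio ^ 2) ^ 2 + 4)) / 2 := by
  have hsqrt5 : √5 ^ 2 = (5 : ℝ) := Real.sq_sqrt (by norm_num)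
  have hradicand : 6 * (5 + √5) = 2 ^ 2 * ((Real.goldenRatio ^ 2) ^ 2 + 4) := by
    rw [goldenRatio_sq_eq]
    linear_combination -hsqrt5
  rw [hradicand, Real.sqrt_mul (by positivity), Real.sqrt_sq (by positivity), goldenRatio_sq_eq]
  ring

/-- `α = (3 + √5 + √(6(5+√5)))/4` is a root of
`p_α(x) = x⁴ − 3x³ − x² + 3x + 1`, and `p_α` is the minimal polynomial of `α`
over `ℚ` (in particular `p_α` is irreducible over `ℚ`). -/
theorem minpoly_alpha_E8 (α : ℝ)
    (hα : α = (3 + Real.sqrt 5 + Real.sqrt (6 * (5 + Real.sqrt 5))) / 4)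
    (p : Polynomial ℚ) (hp : p = X ^ 4 - 3 * X ^ 3 - X ^ 2 + 3 * X + 1) :
    Polynomial.aeval α p = 0 ∧ minpoly ℚ α = p ∧ Irreducible p := by
  obtain rfl : p = alphaPoly ℚ := hp
  have hquad : α ^ 2 = Real.goldenRatio ^ 2 * α + 1 := by
    rw [hα, alpha_eq_half_add_sqrt]
    exact sq_half_add_sqrt_sq_add_four _
  have hroot : aeval α (alphaPoly ℚ) = 0 := aeval_alphaPoly_eq_zero goldenRatio_sq_sq hquad
  have hirr : Irreducible (alphaPoly ℚ) := irreducible_alphaPoly_rat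
  exact ⟨hroot, (minpoly.eq_of_irreducible_of_monic hirr hroot (alphaPoly_monic ℚ)).symm, hirr⟩
end

section
/- Let φ := (1+√5)/2, α := (3 + √5 + √(6(5+√5)))/4 and β := (2 + √5 + √(3(5+2√5)))/2. Then the set {1, α, φ} is linearly independent over ℚ, and the set {1, β, φ} is linearly independent over ℚ. -/
/-!
Both `α` and `β` have the form `y + r` with `y ∈ ℚ(φ)` and `r ^ 2 = z ∈ ℚ(φ)`. If such a number lay
in `ℚ(φ)`, which is the `ℚ`-span of `1` and `φ`, then `z` would be a square there, so its norm would
be a square in `ℚ`. In both cases that norm is `45 / 16`, which is not a rational square.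
-/

open scoped QuadraticAlgebra

section CommRing

variable {R A : Type*} [CommRing R] [Ring A] [Algebra R A] {a b : R}

lemma algHom_apply_eq_smul_one_add_smul (f : QuadraticAlgebra R a b →ₐ[R] A)
    (z : QuadraticAlgebra R a b) : f z = z.re • 1 + z.im • f ω := by
  calc f z = f (algebraMap R _ z.re + z.im • ω) := by
        rw [← QuadraticAlgebra.mk_eq_add_smul_omega]
    _ = z.re • 1 + z.im • f ω := by
        rw [map_add, map_smul, AlgHom.commutes, Algebra.algebraMap_eq_smul_one]

lemma algHom_injective_iff_linearIndependent (f : QuadraticAlgebra R a b →ₐ[R] A) :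
    Function.Injective f ↔ LinearIndependent R ![1, f ω] := by
  rw [injective_iff_map_eq_zero, LinearIndependent.pair_iff]
  constructor
  · intro hf s t hst
    have hz := hf ⟨s, t⟩ (by rw [algHom_apply_eq_smul_one_add_smul, hst])
    exact QuadraticAlgebra.ext_iff.mp hz
  · intro hli z hz
    rw [algHom_apply_eq_smul_one_add_smul] at hz
    exact QuadraticAlgebra.ext_iff.mpr (hli _ _ hz)

lemma mem_range_algHom_iff_mem_span (f : QuadraticAlgebra R a b →ₐ[R] A) {x : A} :
    x ∈ f.range ↔ x ∈ Submodule.span R {1, f ω} := by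
  rw [AlgHom.mem_range, Submodule.mem_span_pair]
  constructor
  · rintro ⟨z, rfl⟩
    exact ⟨z.re, z.im, (algHom_apply_eq_smul_one_add_smul f z).symm⟩
  · rintro ⟨s, t, rfl⟩
    exact ⟨⟨s, t⟩, algHom_apply_eq_smul_one_add_smul f _⟩

lemma notMem_range_of_sq_eq_of_not_isSquare_norm {f : QuadraticAlgebra R a b →ₐ[R] A}
    (hf : Function.Injective f) {x : A} {z : QuadraticAlgebra R a b} (hx : x ^ 2 = f z)
    (hz : ¬ IsSquare z.norm) : x ∉ f.range := by
  rintro ⟨w, rfl⟩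
  have hw : w ^ 2 = z := hf (by rw [map_pow]; exact hx)
  have hz_sq : IsSquare z := hw ▸ IsSquare.sq w
  exact hz (hz_sq.map QuadraticAlgebra.norm)

end CommRing

section Field

variable {K V A : Type*} [Field K] [AddCommGroup V] [Module K V] [Ring A] [Algebra K A]

lemma linearIndependent_triple_of_notMem_span {u v w : V} (huw : LinearIndependent K ![u, w])
    (hv : v ∉ Submodule.span K {u, w}) : LinearIndependent K ![u, v, w] := by
  have hvuw : LinearIndependent K ![v, u, w] :=
    linearIndependent_finCons.mpr ⟨huw, by rwa [Matrix.range_cons_cons_empty]⟩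
  refine (linearIndependent_equiv' (Equiv.swap 0 1) ?_).mpr hvuw
  ext i
  fin_cases i <;> rfl

theorem linearIndependent_one_of_sub_sq_eq {a b : K} {f : QuadraticAlgebra K a b →ₐ[K] A}
    (hf : LinearIndependent K ![1, f ω]) {x : A} {y z : QuadraticAlgebra K a b}
    (hx : (x - f y) ^ 2 = f z) (hz : ¬ IsSquare z.norm) : LinearIndependent K ![1, x, f ω] := by
  have hinj := (algHom_injective_iff_linearIndependent f).mpr hf
  refine linearIndependent_triple_of_notMem_span hf fun hspan ↦ ?_
  have hmem := (mem_range_algHom_iff_mem_span f).mpr hspan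
  exact notMem_range_of_sq_eq_of_not_isSquare_norm hinj hx hz (sub_mem hmem ⟨y, rfl⟩)

end Field

lemma linearIndependent_one_of_irrational {x : ℝ} (hx : Irrational x) :
    LinearIndependent ℚ ![1, x] := by
  rw [LinearIndependent.pair_iff' one_ne_zero]
  intro q hq
  exact hx ⟨q, by rw [← hq, Rat.smul_one_eq_cast]⟩

/-- The embedding into `ℝ` of the golden field `ℚ(φ)`, presented as the quadratic algebra
`ℚ[ω]` with `ω ^ 2 = 1 + ω`, that sends `ω` to the golden ratio. -/
noncomputable def goldenEmbedding : QuadraticAlgebra ℚ 1 1 →ₐ[ℚ] ℝ :=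
  QuadraticAlgebra.lift ⟨Real.goldenRatio, by
    rw [one_smul, one_smul, ← sq, Real.goldenRatio_sq, add_comm]⟩

lemma goldenEmbedding_apply (z : QuadraticAlgebra ℚ 1 1) :
    goldenEmbedding z = z.re + z.im * Real.goldenRatio := by
  simp [goldenEmbedding, Rat.smul_def]

lemma goldenEmbedding_omega : goldenEmbedding ω = Real.goldenRatio := by
  simp [goldenEmbedding_apply]

lemma linearIndependent_one_goldenRatio_of_sub_sq_eq {x : ℝ} {y z : QuadraticAlgebra ℚ 1 1}
    (hx : (x - goldenEmbedding y) ^ 2 = goldenEmbedding z) (hz : ¬ IsSquare z.norm) :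
    LinearIndependent ℚ ![1, x, Real.goldenRatio] := by
  have hφ : LinearIndependent ℚ ![1, goldenEmbedding ω] :=
    goldenEmbedding_omega ▸ linearIndependent_one_of_irrational Real.goldenRatio_irrational
  exact goldenEmbedding_omega ▸ linearIndependent_one_of_sub_sq_eq hφ hx hz

lemma E8_alpha_sub_sq_eq :
    ((3 + √5 + √(6 * (5 + √5))) / 4 - goldenEmbedding ⟨1 / 2, 1 / 2⟩) ^ 2 =
      goldenEmbedding ⟨3 / 2, 3 / 4⟩ := by
  simp only [goldenEmbedding_apply, Real.goldenRatio]
  push_cast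
  calc ((3 + √5 + √(6 * (5 + √5))) / 4 - (1 / 2 + 1 / 2 * ((1 + √5) / 2))) ^ 2
    _ = √(6 * (5 + √5)) ^ 2 / 16 := by ring
    _ = 6 * (5 + √5) / 16 := by rw [Real.sq_sqrt (by positivity)]
    _ = 3 / 2 + 3 / 4 * ((1 + √5) / 2) := by ring

lemma E8_beta_sub_sq_eq :
    ((2 + √5 + √(3 * (5 + 2 * √5))) / 2 - goldenEmbedding ⟨1 / 2, 1⟩) ^ 2 =
      goldenEmbedding ⟨9 / 4, 3⟩ := by
  simp only [goldenEmbedding_apply, Real.goldenRatio]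
  push_cast
  calc ((2 + √5 + √(3 * (5 + 2 * √5))) / 2 - (1 / 2 + 1 * ((1 + √5) / 2))) ^ 2
    _ = √(3 * (5 + 2 * √5)) ^ 2 / 4 := by ring
    _ = 3 * (5 + 2 * √5) / 4 := by rw [Real.sq_sqrt (by positivity)]
    _ = 9 / 4 + 3 * ((1 + √5) / 2) := by ring

/-- With `φ = (1+√5)/2`, `α = (3 + √5 + √(6(5+√5)))/4` and
`β = (2 + √5 + √(3(5+2√5)))/2`, the sets `{1, α, φ}` and `{1, β, φ}` are each
linearly independent over `ℚ`. -/
theorem E8_dimensions_rationally_independent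
    (φ α β : ℝ)
    (hφ : φ = (1 + Real.sqrt 5) / 2)
    (hα : α = (3 + Real.sqrt 5 + Real.sqrt (6 * (5 + Real.sqrt 5))) / 4)
    (hβ : β = (2 + Real.sqrt 5 + Real.sqrt (3 * (5 + 2 * Real.sqrt 5))) / 2) :
    LinearIndependent ℚ ![(1 : ℝ), α, φ] ∧ LinearIndependent ℚ ![(1 : ℝ), β, φ] := by
  obtain rfl : φ = Real.goldenRatio := hφ
  subst hα hβ
  have hnormα : QuadraticAlgebra.norm (⟨3 / 2, 3 / 4⟩ : QuadraticAlgebra ℚ 1 1) = 45 / 16 := by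
    norm_num [QuadraticAlgebra.norm_def]
  have hnormβ : QuadraticAlgebra.norm (⟨9 / 4, 3⟩ : QuadraticAlgebra ℚ 1 1) = 45 / 16 := by
    norm_num [QuadraticAlgebra.norm_def]
  have hnot_sq : ¬ IsSquare (45 / 16 : ℚ) := by norm_num
  exact ⟨linearIndependent_one_goldenRatio_of_sub_sq_eq E8_alpha_sub_sq_eq (hnormα ▸ hnot_sq),
    linearIndependent_one_goldenRatio_of_sub_sq_eq E8_beta_sub_sq_eq (hnormβ ▸ hnot_sq)⟩
end

section
/- Let φ := (1+√5)/2, α := (3 + √5 + √(6(5+√5)))/4, β := (2 + √5 + √(3(5+2√5)))/2, and let Θ be the 3×3 real skew-symmetric matrix with rows (0, φ, α), (−φ, 0, β), (−α, −β, 0). Then Θ is non-degenerate: for every x ∈ ℚ³, if ⟨x, Θy⟩ ∈ ℚ for all y ∈ ℚ³, then x = 0. -/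
/-!
Pairing `x` with the first two standard basis vectors shows that `-(x₁ φ + x₂ α)` and
`x₀ φ - x₂ β` are rational. Once `1, φ, α` are linearly independent over `ℚ`, the first relation
forces `x₁ = x₂ = 0`; the second then says that `x₀ φ` is rational, so `x₀ = 0`.

The independence is that of `1, √5, √(30 + 6√5)`. If `√(a + b√d) = p + q√d` with rational
coefficients, then taking norms from `ℚ(√d)` gives `a² - d b² = (p² - d q²)²`; but
`30² - 5 · 6² = 720` is not a square.
-/

section LinearIndependence

theorem linearIndependent_triple_iff {R M : Type*} [Ring R] [AddCommGroup M] [Module R M]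
    {x y z : M} : LinearIndependent R ![x, y, z] ↔
      ∀ a b c : R, a • x + b • y + c • z = 0 → a = 0 ∧ b = 0 ∧ c = 0 := by
  simp [Fintype.linearIndependent_iff, Fin.forall_fin_succ_pi, Fin.forall_fin_succ,
    Fin.sum_univ_succ, add_assoc]

variable {K L : Type*} [Field K] [CommRing L] [Nontrivial L] [Algebra K L] {d a b : K} {s t : L}

theorem linearIndependent_one_sqrt (hd : ¬IsSquare d) (hs : s ^ 2 = algebraMap K L d) :
    LinearIndependent K ![1, s] := by
  rw [LinearIndependent.pair_iff' one_ne_zero]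
  rintro r rfl
  refine hd ⟨r, (algebraMap K L).injective ?_⟩
  rw [← hs, ← sq, map_pow, Algebra.smul_def, mul_one]

theorem isSquare_norm_of_mem_span_one_sqrt (hd : ¬IsSquare d) (hs : s ^ 2 = algebraMap K L d)
    (ht : t ^ 2 = algebraMap K L a + algebraMap K L b * s)
    (hmem : t ∈ Submodule.span K {1, s}) : IsSquare (a ^ 2 - d * b ^ 2) := by
  obtain ⟨p, q, hpq⟩ := Submodule.mem_span_pair.1 hmem
  have coeff_relation : (p ^ 2 + d * q ^ 2 - a) • (1 : L) + (2 * p * q - b) • s = 0 := by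
    rw [← hpq] at ht
    simp only [Algebra.smul_def, map_sub, map_add, map_mul, map_pow, map_ofNat] at ht ⊢
    linear_combination ht - algebraMap K L q ^ 2 * hs
  have one_s_independent : LinearIndependent K ![1, s] := linearIndependent_one_sqrt hd hs
  rw [LinearIndependent.pair_iff] at one_s_independent
  obtain ⟨ha, hb⟩ := one_s_independent _ _ coeff_relation
  refine ⟨p ^ 2 - d * q ^ 2, ?_⟩
  linear_combination (-a - p ^ 2 - d * q ^ 2) * ha + d * (b + 2 * p * q) * hb

theorem linearIndependent_one_sqrt_nested_sqrt (hd : ¬IsSquare d)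
    (hnorm : ¬IsSquare (a ^ 2 - d * b ^ 2)) (hs : s ^ 2 = algebraMap K L d)
    (ht : t ^ 2 = algebraMap K L a + algebraMap K L b * s) :
    LinearIndependent K ![1, s, t] := by
  have t_notMem : t ∉ Submodule.span K (Set.range ![1, s]) := by
    rw [Matrix.range_cons_cons_empty]
    exact fun hmem => hnorm (isSquare_norm_of_mem_span_one_sqrt hd hs ht hmem)
  simpa using (linearIndependent_one_sqrt hd hs).finSnoc t_notMem

end LinearIndependence

open Real in
theorem linearIndependent_one_phi_alpha :
    LinearIndependent ℚ ![1, (1 + √5) / 2, (3 + √5 + √(6 * (5 + √5))) / 4] := by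
  have radicals_independent : LinearIndependent ℚ ![1, √5, √(6 * (5 + √5))] := by
    apply linearIndependent_one_sqrt_nested_sqrt (d := 5) (a := 30) (b := 6)
    · norm_num
    · norm_num
    · simp
    · rw [sq_sqrt (by positivity)]
      simp only [map_ofNat]
      ring
  rw [linearIndependent_triple_iff] at radicals_independent ⊢
  intro u v w h
  obtain ⟨hu, hv, hw⟩ := radicals_independent (u + v / 2 + 3 * w / 4) (v / 2 + w / 4) (w / 4) (by
    simp only [Rat.smul_def] at h ⊢
    push_cast
    linear_combination h)
  refine ⟨?_, ?_, ?_⟩ <;> linarith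

section Nondegeneracy

open Matrix

/-- Non-degeneracy of a real matrix `Θ`, the condition under which the noncommutative torus `A_Θ`
is simple: no nonzero rational vector `x` has `⟨x, Θ y⟩` rational for every rational `y`. The
pairing is written as an explicit sum. -/
def IsRationallyNondegenerate {n : Type*} [Fintype n] (Θ : Matrix n n ℝ) : Prop :=
  ∀ x : n → ℚ,
    (∀ y : n → ℚ, ∃ q : ℚ, ∑ i, (x i : ℝ) * Θ.mulVec (fun j => (y j : ℝ)) i = (q : ℝ)) → x = 0

theorem isRationallyNondegenerate_of_vecMul {n : Type*} [Fintype n] {Θ : Matrix n n ℝ}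
    (h : ∀ x : n → ℚ, (∀ j, ∃ q : ℚ, ((fun i => (x i : ℝ)) ᵥ* Θ) j = q) → x = 0) :
    IsRationallyNondegenerate Θ := by
  classical
  refine fun x hx => h x fun j => ?_
  obtain ⟨q, hq⟩ := hx (Pi.single j 1)
  have cast_single : (fun i => ((Pi.single j 1 : n → ℚ) i : ℝ)) = Pi.single j 1 := by
    ext i
    simp [Pi.single_apply, apply_ite]
  refine ⟨q, ?_⟩
  rw [← hq, cast_single, mulVec_single_one]
  rfl

theorem theta_E8_nondegenerate_general {φ α : ℝ} (h : LinearIndependent ℚ ![1, φ, α]) (β : ℝ) :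
    IsRationallyNondegenerate !![0, φ, α; -φ, 0, β; -α, -β, 0] := by
  refine isRationallyNondegenerate_of_vecMul fun x hx => ?_
  rw [linearIndependent_triple_iff] at h
  obtain ⟨q₀, column_zero⟩ := hx 0
  obtain ⟨q₁, column_one⟩ := hx 1
  have hq₀ : -(x 1 * φ) + -(x 2 * α) = q₀ := by
    simpa [vecMul, dotProduct, Fin.sum_univ_three] using column_zero
  have hq₁ : x 0 * φ + -(x 2 * β) = q₁ := by
    simpa [vecMul, dotProduct, Fin.sum_univ_three] using column_one
  obtain ⟨-, hx₁, hx₂⟩ := h q₀ (x 1) (x 2) (by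
    simp only [Rat.smul_def]
    linear_combination -hq₀)
  obtain ⟨-, hx₀, -⟩ := h (-q₁) (x 0) 0 (by
    simp only [Rat.smul_def]
    push_cast
    rw [hx₂] at hq₁
    linear_combination hq₁)
  ext i
  fin_cases i
  exacts [hx₀, hx₁, hx₂]

end Nondegeneracy

/-- With `φ = (1+√5)/2`, `α = (3 + √5 + √(6(5+√5)))/4` and
`β = (2 + √5 + √(3(5+2√5)))/2`, the 3×3 skew-symmetric matrix
`Θ = !![0, φ, α; -φ, 0, β; -α, -β, 0]` is non-degenerate: any `x ∈ ℚ³` with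
`⟨x, Θy⟩ ∈ ℚ` for all `y ∈ ℚ³` must be `0`. -/
theorem theta_E8_nondegenerate
    (φ α β : ℝ)
    (hφ : φ = (1 + Real.sqrt 5) / 2)
    (hα : α = (3 + Real.sqrt 5 + Real.sqrt (6 * (5 + Real.sqrt 5))) / 4)
    (hβ : β = (2 + Real.sqrt 5 + Real.sqrt (3 * (5 + 2 * Real.sqrt 5))) / 2)
    (Θ : Matrix (Fin 3) (Fin 3) ℝ) (hΘ : Θ = !![0, φ, α; -φ, 0, β; -α, -β, 0]) :
    ∀ x : Fin 3 → ℚ,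
      (∀ y : Fin 3 → ℚ, ∃ q : ℚ,
        ∑ i, (x i : ℝ) * Θ.mulVec (fun j => (y j : ℝ)) i = (q : ℝ)) → x = 0 := by
  subst hφ hα hΘ
  exact theta_E8_nondegenerate_general linearIndependent_one_phi_alpha β
end

section
/- Let N := 17 and d_m := sin(mπ/17)/sin(π/17) for integers m. Let Θ be the 4×4 real skew-symmetric matrix with rows (0, d₂, d₈, d₁₄), (−d₂, 0, d₆, d₁₀), (−d₈, −d₆, 0, d₄), (−d₁₄, −d₁₀, −d₄, 0). Then Θ is non-degenerate: for every x ∈ ℚ⁴, if ⟨x, Θy⟩ ∈ ℚ for all y ∈ ℚ⁴, then x = 0. -/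
/-!
For a prime `p`, the only rational relations between the values `ψ k` of a nontrivial additive
character `ψ` of `ZMod p` are the multiples of `∑ k, ψ k = 0`, because the `p`-th cyclotomic
polynomial is irreducible. Antisymmetrizing such a relation kills the constant, so the differences
`ψ k - ψ (-k)` satisfy only the relations forced by oddness in `k`. Up to sign and a factor `2i`
these differences are, for odd `p`, the sines `sin (m * π / p)`, hence quantum integers `d m` whose
indices are nonzero and pairwise distinct up to sign modulo `p` are linearly independent over `ℚ`.

Pairing `x` with the first basis vector gives a rational relation between `d 1 = 1`, `d 2`, `d 8`
and `d 14`, and pairing it with the last one a relation between `d 1`, `d 14`, `d 10` and `d 4`;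
together they kill all coordinates of `x`.
-/

open Complex (I)
open Real (pi sin)

section AddChar

variable {p : ℕ} [Fact p.Prime]

lemma isPrimitiveRoot_addChar_one {M : Type*} [CommMonoid M] {ψ : AddChar (ZMod p) M}
    (hψ : ψ ≠ 1) : IsPrimitiveRoot (ψ 1) p := by
  have hpow : ψ 1 ^ p = 1 := by
    rw [← ψ.map_nsmul_eq_pow, nsmul_one, CharP.cast_eq_zero, ψ.map_zero_eq_one]
  have hne : ψ 1 ≠ 1 := (AddChar.zmod_char_ne_one_iff p ψ).1 hψ
  exact IsPrimitiveRoot.iff_orderOf.2 (orderOf_eq_prime hpow hne)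

variable {L : Type*} [Field L] [CharZero L] {ψ : AddChar (ZMod p) L}

lemma apply_eq_apply_of_sum_mul_addChar_eq_zero (hψ : ψ ≠ 1) {f : ZMod p → ℚ}
    (hf : ∑ k, (f k : L) * ψ k = 0) (k l : ZMod p) : f k = f l := by
  let e : Fin p ≃ ZMod p := (ZMod.finEquiv p).toEquiv
  have ψ_pow (i : Fin p) : ψ (e i) = ψ 1 ^ i.val := by
    rw [← ψ.map_nsmul_eq_pow, nsmul_one]
    congr 1
    obtain _ | n := p
    · exact i.elim0
    · exact (Fin.cast_val_eq_self i).symm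
  have hsum : ∑ i : Fin p, (f (e i) : L) * ψ 1 ^ i.val = 0 := by
    simpa only [← ψ_pow] using (e.sum_comp fun k => (f k : L) * ψ k).trans hf
  have hconst := ((isPrimitiveRoot_addChar_one hψ).sum_eq_zero_iff_forall_eq
    Fact.out (f ∘ e)).1 hsum (e.symm k) (e.symm l)
  simpa using hconst

lemma apply_eq_apply_neg_of_sum_mul_addChar_sub_neg_eq_zero (hψ : ψ ≠ 1) {f : ZMod p → ℚ}
    (hf : ∑ k, (f k : L) * (ψ k - ψ (-k)) = 0) (k : ZMod p) : f k = f (-k) := by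
  have hodd : ∑ k, ((f k - f (-k) : ℚ) : L) * ψ k = 0 := by
    have hreflect : ∑ k, (f (-k) : L) * ψ k = ∑ k, (f k : L) * ψ (-k) := by
      simpa using Equiv.sum_comp (Equiv.neg (ZMod p)) fun k => (f k : L) * ψ (-k)
    simpa only [Rat.cast_sub, sub_mul, mul_sub, Finset.sum_sub_distrib, hreflect] using hf
  have hconst := apply_eq_apply_of_sum_mul_addChar_eq_zero hψ hodd k 0
  rwa [neg_zero, sub_self, sub_eq_zero] at hconst

theorem linearIndependent_addChar_sub_neg {ι : Type*} (hψ : ψ ≠ 1) {a : ι → ZMod p}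
    (ha : Function.Injective a) (ha_neg : ∀ i j, a i ≠ -a j) :
    LinearIndependent ℚ fun i => ψ (a i) - ψ (-a i) := by
  have : Finite ι := .of_injective a ha
  have := Fintype.ofFinite ι
  refine Fintype.linearIndependent_iff.2 fun c hc i => ?_
  let f : ZMod p → ℚ := Function.extend a c fun _ => 0
  have f_apply (j : ι) : f (a j) = c j := ha.extend_apply c _ j
  have f_of_notMem (k : ZMod p) (hk : k ∉ Set.range a) : f k = 0 :=
    Function.extend_apply' c _ k hk
  have hf : ∑ k, (f k : L) * (ψ k - ψ (-k)) = 0 := by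
    rw [← hc]
    refine (Fintype.sum_of_injective a ha _ _ (fun k hk => ?_) fun j => ?_).symm
    · rw [f_of_notMem k hk, Rat.cast_zero, zero_mul]
    · rw [f_apply, Rat.smul_def]
  calc c i = f (a i) := (f_apply i).symm
    _ = f (-a i) := apply_eq_apply_neg_of_sum_mul_addChar_sub_neg_eq_zero hψ hf (a i)
    _ = 0 := f_of_notMem _ fun ⟨j, hj⟩ => ha_neg j i hj

end AddChar

section Sine

lemma sin_pi_div_pos {n : ℕ} (hn : 1 < n) : 0 < sin (pi / n) := by
  have hn' : (1 : ℝ) < n := by exact_mod_cast hn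
  exact Real.sin_pos_of_pos_of_lt_pi (by positivity) (div_lt_self Real.pi_pos hn')

-- The sign makes `exp (π * I / n)`, a `2n`-th root of unity, into an `n`-th root of unity.
lemma exists_addChar_ne_one_natCast_eq_neg_exp_pow {n : ℕ} (hn : 1 < n) (hodd : Odd n) :
    ∃ ψ : AddChar (ZMod n) ℂ, ψ ≠ 1 ∧
      ∀ m : ℕ, ψ m = (-Complex.exp ((pi / n : ℝ) * I)) ^ m := by
  have : NeZero n := ⟨by omega⟩
  have hpow : (-Complex.exp ((pi / n : ℝ) * I)) ^ n = 1 := by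
    have hexp : n * ((pi / n : ℝ) * I) = pi * I := by
      push_cast
      field_simp [NeZero.ne (n : ℂ)]
    rw [hodd.neg_pow, ← Complex.exp_nat_mul, hexp, Complex.exp_pi_mul_I, neg_neg]
  refine ⟨AddChar.zmodChar n hpow, fun htriv => ?_, AddChar.zmodChar_apply' hpow⟩
  have hroot : -Complex.exp ((pi / n : ℝ) * I) = 1 := by
    rw [← pow_one (-Complex.exp _), ← AddChar.zmodChar_apply' hpow, htriv, AddChar.one_apply]
  have him := congrArg Complex.im hroot
  rw [Complex.neg_im, Complex.exp_ofReal_mul_I_im, Complex.one_im, neg_eq_zero] at him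
  exact (sin_pi_div_pos hn).ne' him

lemma neg_exp_pow_sub_inv (θ : ℝ) (m : ℕ) :
    (-Complex.exp (θ * I)) ^ m - ((-Complex.exp (θ * I)) ^ m)⁻¹ =
      (-1) ^ m * (sin (m * θ) * (2 * I)) := by
  have hsin : Complex.exp (m * θ * I) - Complex.exp (-(m * θ * I)) = sin (m * θ) * (2 * I) := by
    rw [Complex.ofReal_sin, Complex.sin]
    push_cast
    rw [← neg_mul]
    linear_combination (Complex.exp (m * θ * I) - Complex.exp (-(m * θ) * I)) * Complex.I_sq
  rw [neg_pow, mul_inv, ← inv_pow, inv_neg_one, ← mul_sub, ← Complex.exp_nat_mul, ← Complex.exp_neg,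
    ← mul_assoc, hsin]

variable {p : ℕ} [Fact p.Prime] {ι : Type*} {m : ι → ℕ}

theorem linearIndependent_sin_mul_pi_div
    (hm : Function.Injective fun i => (m i : ZMod p)) (hm_neg : ∀ i j, (m i : ZMod p) ≠ -m j) :
    LinearIndependent ℚ fun i => sin (m i * pi / p) := by
  obtain rfl | hodd := (Fact.out : p.Prime).eq_two_or_odd'
  · have : IsEmpty ι := ⟨fun i => hm_neg i i (ZMod.neg_eq_self_mod_two _).symm⟩
    exact linearIndependent_empty_type
  obtain ⟨ψ, hψ, ψ_natCast⟩ :=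
    exists_addChar_ne_one_natCast_eq_neg_exp_pow (Fact.out : p.Prime).one_lt hodd
  have signed_diff (i : ι) :
      (-1) ^ m i * (ψ (m i) - ψ (-m i)) = sin (m i * pi / p) * (2 * I) := by
    rw [AddChar.map_neg_eq_inv, ψ_natCast, neg_exp_pow_sub_inv, ← mul_assoc, ← mul_pow, neg_one_mul,
      neg_neg, one_pow, one_mul, mul_div_assoc]
  let mulTwoI : ℝ →ₗ[ℚ] ℂ := (LinearMap.toSpanSingleton ℝ ℂ (2 * I)).restrictScalars ℚ
  refine .of_comp mulTwoI ?_
  convert! (linearIndependent_addChar_sub_neg hψ hm hm_neg).units_smul fun i => (-1) ^ m i using 1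
  ext1 i
  simpa [mulTwoI, Units.smul_def, Rat.smul_def] using (signed_diff i).symm

theorem linearIndependent_sin_mul_pi_div_div_sin
    (hm : Function.Injective fun i => (m i : ZMod p)) (hm_neg : ∀ i j, (m i : ZMod p) ≠ -m j) :
    LinearIndependent ℚ fun i => sin (m i * pi / p) / sin (pi / p) := by
  have hsin : sin (pi / p) ≠ 0 := (sin_pi_div_pos (Fact.out : p.Prime).one_lt).ne'
  refine .of_comp (LinearMap.mulRight ℚ (sin (pi / p))) ?_
  simpa only [Function.comp_def, LinearMap.mulRight_apply, div_mul_cancel₀ _ hsin] using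
    linearIndependent_sin_mul_pi_div hm hm_neg

end Sine

lemma exists_ratCast_eq_sum_mul_apply {m n : Type*} [Fintype m] [Fintype n]
    {A : Matrix m n ℝ} {x : m → ℚ}
    (hx : ∀ y : n → ℚ, ∃ q : ℚ, ∑ i, (x i : ℝ) * A.mulVec (fun j => (y j : ℝ)) i = q) (j : n) :
    ∃ q : ℚ, ∑ i, (x i : ℝ) * A i j = q := by
  classical
  obtain ⟨q, hq⟩ := hx (Pi.single j 1)
  have hcast : (fun k => ((Pi.single j 1 : n → ℚ) k : ℝ)) = Pi.single j 1 := by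
    ext k
    rw [Pi.single_apply, Pi.single_apply]
    split_ifs <;> norm_num
  refine ⟨q, ?_⟩
  simpa only [hcast, Matrix.mulVec_single_one, Matrix.col_apply] using hq

/-- With `d m = sin(mπ/17)/sin(π/17)`, the 4×4 skew-symmetric
matrix with rows `(0, d₂, d₈, d₁₄)`, `(−d₂, 0, d₆, d₁₀)`, `(−d₈, −d₆, 0, d₄)`,
`(−d₁₄, −d₁₀, −d₄, 0)` is non-degenerate: any `x ∈ ℚ⁴` with `⟨x, Θy⟩ ∈ ℚ` for
all `y ∈ ℚ⁴` must be `0`. -/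
theorem theta_PSU2_15_nondegenerate
    (d : ℕ → ℝ)
    (hd : ∀ m : ℕ, d m = Real.sin (m * Real.pi / 17) / Real.sin (Real.pi / 17))
    (Θ : Matrix (Fin 4) (Fin 4) ℝ)
    (hΘ : Θ = !![0, d 2, d 8, d 14;
                 -d 2, 0, d 6, d 10;
                 -d 8, -d 6, 0, d 4;
                 -d 14, -d 10, -d 4, 0]) :
    ∀ x : Fin 4 → ℚ,
      (∀ y : Fin 4 → ℚ, ∃ q : ℚ,
        ∑ i, (x i : ℝ) * Θ.mulVec (fun j => (y j : ℝ)) i = (q : ℝ)) → x = 0 := by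
  intro x hx
  have d_one : d 1 = 1 := by
    have hsin : sin (pi / 17) ≠ 0 := (sin_pi_div_pos (n := 17) (by norm_num)).ne'
    rw [hd, Nat.cast_one, one_mul, div_self hsin]
  have d_indep (m : Fin 4 → ℕ) (hm : Function.Injective fun i => (m i : ZMod 17))
      (hm_neg : ∀ i j, (m i : ZMod 17) ≠ -m j) : LinearIndependent ℚ fun i => d (m i) := by
    have : Fact (Nat.Prime 17) := ⟨by norm_num⟩
    simpa only [hd, Nat.cast_ofNat] using
      linearIndependent_sin_mul_pi_div_div_sin (p := 17) hm hm_neg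
  obtain ⟨q, hq⟩ := exists_ratCast_eq_sum_mul_apply hx 0
  obtain ⟨r, hr⟩ := exists_ratCast_eq_sum_mul_apply hx 3
  simp only [hΘ, Fin.sum_univ_four, Matrix.of_apply, Matrix.cons_val] at hq hr
  have h_first := Fintype.linearIndependent_iff.1
    (d_indep ![1, 2, 8, 14] (by decide) (by decide)) ![q, x 1, x 2, x 3] (by
      simp only [Fin.sum_univ_four, Rat.smul_def, Matrix.cons_val, d_one]
      linear_combination -hq)
  have h_last := Fintype.linearIndependent_iff.1
    (d_indep ![1, 14, 10, 4] (by decide) (by decide)) ![-r, x 0, x 1, x 2] (by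
      simp only [Fin.sum_univ_four, Rat.smul_def, Matrix.cons_val, d_one, Rat.cast_neg]
      linear_combination hr)
  ext i
  fin_cases i
  exacts [h_last 1, h_first 1, h_first 2, h_first 3]
end
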